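/- Let ℓ ∈ 𝕃_∞, ν ∈ (0,1], suppose γ := max_{‖λ‖₁=1} min_i (−(Aλ)_i) > 0, and let {λ_t} be boosting iterates whose steps α_i are Wolfe steps, i.e. each α_i ≥ 0 satisfies L(A(λ_{i−1}+α_i v_i)) ≤ L(Aλ_{i−1}) − α_i(1−ν/2)·‖Aᵀ∇L(Aλ_{i−1})‖_∞ and ∇L(A(λ_{i−1}+α_i v_i))ᵀA v_i ≥ −(1−ν/4)·‖Aᵀ∇L(Aλ_{i−1})‖_∞. Let t > t₀ ≥ 0 with t ≥ 8C₁⁶·ln(m)/(γ²·ν(2−ν)). Then M(Aλ_t) := min_{k∈[m]} (−(Aλ_t)_k)/‖λ_t‖₁ ≥ γ·(2−ν)/(2·C_{t₀+1}²) − 4C₁⁴·ln(c₀)/(t·ν·γ), where c₀ := max{1, m·C_{t₀+1}·L(Aλ_{t₀})·exp(((2−ν)γ/(2·C_{t₀+1}²))·Σ_{i=1}^{t₀+1} α_i)}. -/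

import Mathlib

open Real Finset

noncomputable section

/-- The property that `C` is a valid curvature constant at level `z`:
`C ≥ 1` and `C⁻¹ ≤ eˣ / ℓ⁽ⁱ⁾(x) ≤ C` for all `x ≤ z` and `i ∈ {0,1,2}`. -/
def CBound (ℓ : ℝ → ℝ) (z C : ℝ) : Prop :=
  1 ≤ C ∧ ∀ x ≤ z, ∀ i ≤ 2,
    C⁻¹ ≤ Real.exp x / iteratedDeriv i ℓ x ∧ Real.exp x / iteratedDeriv i ℓ x ≤ C

/-- `C_ℓ(z)`: the least valid curvature constant at level `z`. -/
def Cconst (ℓ : ℝ → ℝ) (z : ℝ) : ℝ := sInf {C : ℝ | CBound ℓ z C}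

/-- Membership in the class `𝕃`: positive, twice continuously differentiable,
strictly convex, and `C_ℓ(z) < ∞` (i.e. some valid constant exists) for every `z`. -/
def MemL (ℓ : ℝ → ℝ) : Prop :=
  (∀ x, 0 < ℓ x) ∧ ContDiff ℝ 2 ℓ ∧ StrictConvexOn ℝ Set.univ ℓ ∧
    ∀ z : ℝ, ∃ C : ℝ, CBound ℓ z C

/-- Membership in `𝕃_∞`: in `𝕃` and moreover `C_ℓ(z) → 1` as `z → −∞`. -/
def MemLinf (ℓ : ℝ → ℝ) : Prop :=
  MemL ℓ ∧ Filter.Tendsto (Cconst ℓ) Filter.atBot (nhds 1)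

variable {m n : ℕ}

/-- The empirical risk `L(Aλ) = (1/m) Σᵢ ℓ((Aλ)ᵢ)`. -/
def LL (ℓ : ℝ → ℝ) (A : Matrix (Fin m) (Fin n) ℝ) (lam : Fin n → ℝ) : ℝ :=
  (∑ i, ℓ (A.mulVec lam i)) / m

/-- The gradient vector `∇L(Aλ)`, with `i`-th entry `ℓ'((Aλ)ᵢ)/m`. -/
def gradL (ℓ : ℝ → ℝ) (A : Matrix (Fin m) (Fin n) ℝ) (lam : Fin n → ℝ) : Fin m → ℝ :=
  fun i => deriv ℓ (A.mulVec lam i) / m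

/-- `‖Aᵀ ∇L(Aλ)‖_∞`. -/
def gInf (ℓ : ℝ → ℝ) (A : Matrix (Fin m) (Fin n) ℝ) (lam : Fin n → ℝ) : ℝ :=
  ⨆ j : Fin n, |∑ i, gradL ℓ A lam i * A i j|

/-- `‖∇L(Aλ)‖₁`. -/
def gOne (ℓ : ℝ → ℝ) (A : Matrix (Fin m) (Fin n) ℝ) (lam : Fin n → ℝ) : ℝ :=
  ∑ i, |gradL ℓ A lam i|

/-- `γ̂ = ‖Aᵀ∇L(Aλ)‖_∞ / ‖∇L(Aλ)‖₁`. -/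
def gammaHat (ℓ : ℝ → ℝ) (A : Matrix (Fin m) (Fin n) ℝ) (lam : Fin n → ℝ) : ℝ :=
  gInf ℓ A lam / gOne ℓ A lam

/-- `C = C_ℓ(ℓ⁻¹(m · L(Aλ)))`. -/
def Cstep (ℓ : ℝ → ℝ) (A : Matrix (Fin m) (Fin n) ℝ) (lam : Fin n → ℝ) : ℝ :=
  Cconst ℓ (Function.invFun ℓ ((m : ℝ) * LL ℓ A lam))

/-- The (minimum `l¹`) margin `M(Aλ) = min_k (−(Aλ)_k) / ‖λ‖₁`. -/
def margin (A : Matrix (Fin m) (Fin n) ℝ) (lam : Fin n → ℝ) : ℝ :=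
  ⨅ k : Fin m, (-(A.mulVec lam k)) / (∑ j, |lam j|)

/-- The maximum margin `γ = max_{‖λ‖₁=1} min_i (−(Aλ)ᵢ)`. -/
def gammaMax (A : Matrix (Fin m) (Fin n) ℝ) : ℝ :=
  sSup {r : ℝ | ∃ lam : Fin n → ℝ, (∑ j, |lam j|) = 1 ∧ r = ⨅ i : Fin m, -(A.mulVec lam i)}

/-- Boosting iterates: `λ₀ = 0`, `λ_t = λ_{t-1} + α_t • v_t` where `v_t` is a signed
standard basis vector satisfying `∇L(Aλ_{t-1})ᵀ A v_t = −‖Aᵀ∇L(Aλ_{t-1})‖_∞`. -/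
def IsBoostSeq (ℓ : ℝ → ℝ) (A : Matrix (Fin m) (Fin n) ℝ)
    (lam : ℕ → Fin n → ℝ) (α : ℕ → ℝ) (v : ℕ → Fin n → ℝ) : Prop :=
  lam 0 = 0 ∧
  (∀ t : ℕ, 1 ≤ t → lam t = lam (t-1) + α t • v t) ∧
  (∀ t : ℕ, 1 ≤ t → ∃ s : ℝ, (s = 1 ∨ s = -1) ∧ ∃ j : Fin n, v t = s • (Pi.single j (1:ℝ) : Fin n → ℝ)) ∧
  (∀ t : ℕ, 1 ≤ t →
    ∑ i, gradL ℓ A (lam (t-1)) i * A.mulVec (v t) i = - gInf ℓ A (lam (t-1)))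

/-- The quantity `Υ_ν(γ)`. -/
def Upsilon (ν γ : ℝ) : ℝ :=
  ((2/ν) * Real.log 2 - (2/ν) * Real.log ((1+γ) ^ (1-ν) + (1-γ) ^ (1-ν))
      - Real.log (1-γ^2)) /
    (Real.log (1+γ) - Real.log (1-γ))

/-!
Along a Wolfe step of length `a` the risk shrinks at least by the factor `exp (-r a)` with
`r = (2 - ν) γ / (2 C²)`: sufficient decrease costs `(1 - ν/2) a ‖Aᵀ∇L‖_∞`, weak duality gives
`‖Aᵀ∇L‖_∞ ≥ γ ‖∇L‖₁`, and `‖∇L‖₁ ≥ L / C²` because `ℓ` and `ℓ'` are both within a factor `C` of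
`exp`. The curvature condition, together with the same comparison for `ℓ''`, bounds each step below
by `ν γ / (4 C⁴)`, so the total step length `S_t`, which dominates `‖λ_t‖₁`, grows linearly.
Since `exp (Aλ_t)_k ≤ m C L(Aλ_t)`, taking logarithms and dividing by `S_t` yields the margin bound;
replacing `S_t` by the smaller `‖λ_t‖₁` is harmless once all margins are nonnegative, which the
lower bound on `t` ensures.
-/

/-! ### Losses comparable to the exponential -/

namespace CBound

variable {ℓ : ℝ → ℝ} {x z z' C : ℝ} {i j : ℕ}

lemma pos (h : CBound ℓ z C) : 0 < C := one_pos.trans_le h.1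

lemma anti (h : CBound ℓ z C) (hz : z' ≤ z) : CBound ℓ z' C :=
  ⟨h.1, fun x hx => h.2 x (hx.trans hz)⟩

lemma iteratedDeriv_pos (h : CBound ℓ z C) (hx : x ≤ z) (hi : i ≤ 2) :
    0 < iteratedDeriv i ℓ x :=
  (div_pos_iff_of_pos_left (exp_pos x)).mp ((inv_pos.mpr h.pos).trans_le (h.2 x hx i hi).1)

lemma exp_le (h : CBound ℓ z C) (hx : x ≤ z) (hi : i ≤ 2) :
    exp x ≤ C * iteratedDeriv i ℓ x :=
  (div_le_iff₀ (h.iteratedDeriv_pos hx hi)).mp (h.2 x hx i hi).2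

lemma iteratedDeriv_le (h : CBound ℓ z C) (hx : x ≤ z) (hi : i ≤ 2) :
    iteratedDeriv i ℓ x ≤ C * exp x := by
  have hinv := (h.2 x hx i hi).1
  rwa [le_div_iff₀ (h.iteratedDeriv_pos hx hi), inv_mul_le_iff₀ h.pos] at hinv

lemma iteratedDeriv_le_sq_mul (h : CBound ℓ z C) (hx : x ≤ z) (hi : i ≤ 2) (hj : j ≤ 2) :
    iteratedDeriv i ℓ x ≤ C ^ 2 * iteratedDeriv j ℓ x :=
  calc iteratedDeriv i ℓ x ≤ C * exp x := h.iteratedDeriv_le hx hi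
    _ ≤ C * (C * iteratedDeriv j ℓ x) := mul_le_mul_of_nonneg_left (h.exp_le hx hj) h.pos.le
    _ = C ^ 2 * iteratedDeriv j ℓ x := by ring

end CBound

lemma mem_range_of_convexOn_of_hasDerivAt {f : ℝ → ℝ} {f' x y : ℝ}
    (hf : ConvexOn ℝ Set.univ f) (hderiv : HasDerivAt f f' x) (hf' : 0 < f') (hy : f x ≤ y) :
    y ∈ Set.range f := by
  have hcont : Continuous f :=
    continuousOn_univ.mp (hf.continuousOn isOpen_univ)
  -- The tangent at `x` has reached the value `y` at the point `w`.
  set w := x + (y - f x) / f' with hw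
  have hyw : y ≤ f w := by
    rcases hy.eq_or_lt with rfl | hlt
    · simp [hw]
    · have hxw : x < w := lt_add_of_pos_right x (div_pos (sub_pos.mpr hlt) hf')
      have hslope := hf.le_slope_of_hasDerivAt (Set.mem_univ x) (Set.mem_univ w) hxw hderiv
      rw [slope_def_field, le_div_iff₀ (sub_pos.mpr hxw)] at hslope
      have htangent : f' * (w - x) = y - f x := by
        rw [hw, add_sub_cancel_left, mul_div_cancel₀ _ hf'.ne']
      linarith
  exact mem_range_of_exists_le_of_exists_ge hcont ⟨x, hy⟩ ⟨w, hyw⟩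

lemma cbound_Cconst {ℓ : ℝ → ℝ} {z : ℝ} (h : ∃ C, CBound ℓ z C) :
    CBound ℓ z (Cconst ℓ z) := by
  have hone : 1 ≤ Cconst ℓ z := le_csInf h fun C hC => hC.1
  obtain ⟨C₀, hC₀⟩ := h
  refine ⟨hone, fun x hx i hi => ⟨?_, le_csInf ⟨C₀, hC₀⟩ fun C hC => (hC.2 x hx i hi).2⟩⟩
  have hratio : 0 < exp x / iteratedDeriv i ℓ x :=
    div_pos (exp_pos x) (hC₀.iteratedDeriv_pos hx hi)
  rw [inv_le_comm₀ (one_pos.trans_le hone) hratio]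
  exact le_csInf ⟨C₀, hC₀⟩ fun C hC => (inv_le_comm₀ hC.pos hratio).mp (hC.2 x hx i hi).1

namespace MemL

variable {ℓ : ℝ → ℝ} (h : MemL ℓ)
include h

lemma pos (x : ℝ) : 0 < ℓ x := h.1 x

lemma convexOn : ConvexOn ℝ Set.univ ℓ := h.2.2.1.convexOn

lemma iteratedDeriv_pos (x : ℝ) {i : ℕ} (hi : i ≤ 2) : 0 < iteratedDeriv i ℓ x :=
  let ⟨_, hC⟩ := h.2.2.2 x
  hC.iteratedDeriv_pos le_rfl hi

lemma deriv_pos (x : ℝ) : 0 < deriv ℓ x :=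
  iteratedDeriv_one (f := ℓ) ▸ h.iteratedDeriv_pos x one_le_two

lemma strictMono : StrictMono ℓ := strictMono_of_deriv_pos h.deriv_pos

lemma hasDerivAt (x : ℝ) : HasDerivAt ℓ (deriv ℓ x) x :=
  (h.2.1.differentiable two_ne_zero x).hasDerivAt

lemma hasDerivAt_deriv (x : ℝ) : HasDerivAt (deriv ℓ) (iteratedDeriv 2 ℓ x) x := by
  rw [iteratedDeriv_succ, iteratedDeriv_one]
  exact (h.2.1.differentiable_deriv_two x).hasDerivAt

lemma apply_invFun_of_le {x y : ℝ} (hxy : ℓ x ≤ y) : ℓ (Function.invFun ℓ y) = y :=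
  Function.invFun_eq
    (mem_range_of_convexOn_of_hasDerivAt h.convexOn (h.hasDerivAt x) (h.deriv_pos x) hxy)

end MemL

/-! ### Risk, gradient and weak duality -/

section Risk

variable {ℓ : ℝ → ℝ} {A : Matrix (Fin m) (Fin n) ℝ} {u w : Fin n → ℝ}

lemma natCast_mul_LL : (m : ℝ) * LL ℓ A u = ∑ i, ℓ (A.mulVec u i) := by
  rcases eq_or_ne m 0 with rfl | hm
  · simp
  · exact mul_div_cancel₀ _ (Nat.cast_ne_zero.mpr hm)

lemma MemL.apply_mulVec_le (h : MemL ℓ) (k : Fin m) : ℓ (A.mulVec u k) ≤ m * LL ℓ A u := by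
  rw [natCast_mul_LL]
  exact single_le_sum (f := fun i => ℓ (A.mulVec u i)) (fun i _ => (h.pos _).le) (mem_univ k)

lemma MemL.LL_pos [NeZero m] (h : MemL ℓ) : 0 < LL ℓ A u :=
  div_pos (sum_pos (fun _ _ => h.pos _) univ_nonempty) (Nat.cast_pos.mpr (NeZero.pos m))

lemma convexOn_LL (h : ConvexOn ℝ Set.univ ℓ) : ConvexOn ℝ Set.univ (LL ℓ A) := by
  refine ⟨convex_univ, fun x _ y _ a b ha hb hab => ?_⟩
  simp only [LL, smul_eq_mul]
  rw [mul_div_assoc', mul_div_assoc', ← add_div, mul_sum, mul_sum, ← sum_add_distrib]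
  gcongr with k
  rw [Matrix.mulVec_add, Matrix.mulVec_smul, Matrix.mulVec_smul]
  exact h.2 (Set.mem_univ _) (Set.mem_univ _) ha hb hab

lemma MemL.cbound_Cstep (h : MemL ℓ) (huw : LL ℓ A u ≤ LL ℓ A w) (k : Fin m) :
    CBound ℓ (A.mulVec u k) (Cstep ℓ A w) := by
  have hle : ℓ (A.mulVec u k) ≤ m * LL ℓ A w :=
    (h.apply_mulVec_le k).trans (mul_le_mul_of_nonneg_left huw m.cast_nonneg)
  refine (cbound_Cconst (h.2.2.2 _)).anti (h.strictMono.le_iff_le.mp ?_)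
  rwa [h.apply_invFun_of_le hle]

lemma MemL.Cstep_pos (h : MemL ℓ) : 0 < Cstep ℓ A w :=
  (cbound_Cconst (h.2.2.2 _)).pos

lemma MemL.gradL_nonneg (h : MemL ℓ) (i : Fin m) : 0 ≤ gradL ℓ A u i :=
  div_nonneg (h.deriv_pos _).le m.cast_nonneg

lemma MemL.gOne_eq_sum (h : MemL ℓ) : gOne ℓ A u = ∑ i, gradL ℓ A u i :=
  sum_congr rfl fun i _ => abs_of_nonneg (h.gradL_nonneg i)

lemma gInf_nonneg : 0 ≤ gInf ℓ A u := Real.iSup_nonneg fun _ => abs_nonneg _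

lemma MemL.LL_le_sq_Cstep_mul_gOne (h : MemL ℓ) (huw : LL ℓ A u ≤ LL ℓ A w) :
    LL ℓ A u ≤ Cstep ℓ A w ^ 2 * gOne ℓ A u := by
  simp only [h.gOne_eq_sum, LL, gradL, sum_div, mul_sum, ← mul_div_assoc]
  gcongr with i
  simpa using (h.cbound_Cstep huw i).iteratedDeriv_le_sq_mul le_rfl zero_le_two one_le_two

lemma MemL.gOne_pos [NeZero m] (h : MemL ℓ) : 0 < gOne ℓ A u :=
  pos_of_mul_pos_right (h.LL_pos.trans_le (h.LL_le_sq_Cstep_mul_gOne le_rfl)) (sq_nonneg _)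

lemma abs_dotProduct_le_iSup_mul_sum {ι : Type*} [Fintype ι] (x y : ι → ℝ) :
    |x ⬝ᵥ y| ≤ (⨆ j, |x j|) * ∑ j, |y j| := by
  rw [dotProduct, mul_sum]
  refine (abs_sum_le_sum_abs _ _).trans (sum_le_sum fun j _ => ?_)
  rw [abs_mul]
  exact mul_le_mul_of_nonneg_right (le_ciSup (Set.finite_range fun j => |x j|).bddAbove j)
    (abs_nonneg _)

lemma iInf_neg_mulVec_mul_sum_le {c : Fin m → ℝ} (hc : ∀ i, 0 ≤ c i) (u : Fin n → ℝ) :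
    (⨅ i, -(A.mulVec u i)) * ∑ i, c i ≤ (⨆ j, |∑ i, c i * A i j|) * ∑ j, |u j| :=
  calc (⨅ i, -(A.mulVec u i)) * ∑ i, c i = ∑ i, c i * ⨅ i, -(A.mulVec u i) := by
        rw [mul_comm, sum_mul]
    _ ≤ ∑ i, c i * -(A.mulVec u i) := sum_le_sum fun i _ =>
        mul_le_mul_of_nonneg_left (ciInf_le (Set.finite_range _).bddBelow i) (hc i)
    _ = -(c ⬝ᵥ A.mulVec u) := by simp [dotProduct]
    _ ≤ |Matrix.vecMul c A ⬝ᵥ u| := by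
        rw [Matrix.dotProduct_mulVec]
        exact neg_le_abs _
    _ ≤ (⨆ j, |∑ i, c i * A i j|) * ∑ j, |u j| := abs_dotProduct_le_iSup_mul_sum _ u

lemma gammaMax_mul_sum_le {c : Fin m → ℝ} (hc : ∀ i, 0 ≤ c i) :
    gammaMax A * ∑ i, c i ≤ ⨆ j, |∑ i, c i * A i j| := by
  have hsup : 0 ≤ ⨆ j, |∑ i, c i * A i j| := Real.iSup_nonneg fun _ => abs_nonneg _
  rcases (sum_nonneg fun i _ => hc i).eq_or_lt with hzero | hpos
  · rwa [← hzero, mul_zero]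
  · rw [← le_div_iff₀ hpos]
    refine Real.sSup_le ?_ (div_nonneg hsup hpos.le)
    rintro _ ⟨u, hu, rfl⟩
    rw [le_div_iff₀ hpos]
    simpa [hu] using iInf_neg_mulVec_mul_sum_le (A := A) hc u

lemma MemL.gammaMax_mul_gOne_le_gInf (h : MemL ℓ) :
    gammaMax A * gOne ℓ A u ≤ gInf ℓ A u := by
  rw [h.gOne_eq_sum]
  exact gammaMax_mul_sum_le h.gradL_nonneg

lemma mulVec_add_smul_apply (u v : Fin n → ℝ) (s : ℝ) (k : Fin m) :
    A.mulVec (u + s • v) k = A.mulVec u k + s * A.mulVec v k := by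
  simp [Matrix.mulVec_add, Matrix.mulVec_smul]

lemma MemL.hasDerivAt_sum_gradL_mul (h : MemL ℓ) (u v : Fin n → ℝ) (s : ℝ) :
    HasDerivAt (fun s : ℝ => ∑ k, gradL ℓ A (u + s • v) k * A.mulVec v k)
      (∑ k, iteratedDeriv 2 ℓ (A.mulVec (u + s • v) k) * A.mulVec v k ^ 2 / m) s := by
  refine HasDerivAt.fun_sum fun k _ => ?_
  have hline : HasDerivAt (fun s : ℝ => A.mulVec (u + s • v) k) (A.mulVec v k) s := by
    simpa only [mulVec_add_smul_apply, id, one_mul] using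
      ((hasDerivAt_id s).mul_const (A.mulVec v k)).const_add (A.mulVec u k)
  refine ((((h.hasDerivAt_deriv _).comp s hline).div_const (m : ℝ)).mul_const
    (A.mulVec v k)).congr_deriv ?_
  ring

lemma MemL.sum_iteratedDeriv_two_mul_sq_le (h : MemL ℓ) (huw : LL ℓ A u ≤ LL ℓ A w)
    {v : Fin n → ℝ} (hv : ∀ k, |A.mulVec v k| ≤ 1) :
    ∑ k, iteratedDeriv 2 ℓ (A.mulVec u k) * A.mulVec v k ^ 2 / m ≤
      Cstep ℓ A w ^ 2 * LL ℓ A u := by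
  simp only [LL, sum_div, mul_sum, ← mul_div_assoc]
  refine sum_le_sum fun k _ => div_le_div_of_nonneg_right ?_ m.cast_nonneg
  calc iteratedDeriv 2 ℓ (A.mulVec u k) * A.mulVec v k ^ 2
      ≤ iteratedDeriv 2 ℓ (A.mulVec u k) :=
        mul_le_of_le_one_right (h.iteratedDeriv_pos _ le_rfl).le
          ((sq_le_one_iff_abs_le_one _).mpr (hv k))
    _ ≤ Cstep ℓ A w ^ 2 * ℓ (A.mulVec u k) := by
        simpa using (h.cbound_Cstep huw k).iteratedDeriv_le_sq_mul le_rfl le_rfl zero_le_two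

end Risk

/-! ### A single Wolfe step -/

/-- The Wolfe conditions with parameter `ν` for a step of length `a` from `u` in the direction
`v`. The slope of the risk at `u` along `v` is taken to be `-‖Aᵀ∇L(Au)‖_∞`, its value for the
directions chosen by boosting. -/
structure IsWolfeStep (ℓ : ℝ → ℝ) (A : Matrix (Fin m) (Fin n) ℝ) (ν : ℝ) (u v : Fin n → ℝ)
    (a : ℝ) : Prop where
  nonneg : 0 ≤ a
  decrease : LL ℓ A (u + a • v) ≤ LL ℓ A u - a * (1 - ν / 2) * gInf ℓ A u
  curvature : -(1 - ν / 4) * gInf ℓ A u ≤ ∑ k, gradL ℓ A (u + a • v) k * A.mulVec v k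

/-- The rate, per unit of step length, at which Wolfe steps with parameter `ν` decrease the
logarithm of the risk on a sublevel set with curvature constant `C`, for data of maximum margin
`γ`. -/
def decayRate (ν γ C : ℝ) : ℝ := (2 - ν) * γ / (2 * C ^ 2)

lemma decayRate_nonneg {ν γ C : ℝ} (hν : ν ≤ 2) (hγ : 0 ≤ γ) : 0 ≤ decayRate ν γ C :=
  div_nonneg (mul_nonneg (sub_nonneg.mpr hν) hγ) (by positivity)

section WolfeStep

variable {ℓ : ℝ → ℝ} {A : Matrix (Fin m) (Fin n) ℝ} {ν a : ℝ} {u v w : Fin n → ℝ}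

lemma IsWolfeStep.LL_add_smul_le (hstep : IsWolfeStep ℓ A ν u v a) (hν : ν ≤ 2) :
    LL ℓ A (u + a • v) ≤ LL ℓ A u :=
  hstep.decrease.trans <| sub_le_self _ <|
    mul_nonneg (mul_nonneg hstep.nonneg (by linarith)) gInf_nonneg

lemma MemL.decayRate_mul_LL_le (h : MemL ℓ) (hν : ν ≤ 2) (hγ : 0 ≤ gammaMax A)
    (huw : LL ℓ A u ≤ LL ℓ A w) :
    decayRate ν (gammaMax A) (Cstep ℓ A w) * LL ℓ A u ≤ (1 - ν / 2) * gInf ℓ A u := by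
  have hC : 0 < Cstep ℓ A w := h.Cstep_pos
  calc decayRate ν (gammaMax A) (Cstep ℓ A w) * LL ℓ A u
      ≤ decayRate ν (gammaMax A) (Cstep ℓ A w) * (Cstep ℓ A w ^ 2 * gOne ℓ A u) :=
        mul_le_mul_of_nonneg_left (h.LL_le_sq_Cstep_mul_gOne huw) (decayRate_nonneg hν hγ)
    _ = (1 - ν / 2) * (gammaMax A * gOne ℓ A u) := by
        rw [decayRate]
        field_simp
    _ ≤ (1 - ν / 2) * gInf ℓ A u :=
        mul_le_mul_of_nonneg_left h.gammaMax_mul_gOne_le_gInf (by linarith)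

lemma IsWolfeStep.LL_add_smul_le_exp_mul [NeZero m] (hstep : IsWolfeStep ℓ A ν u v a)
    (h : MemL ℓ) (hν : ν ≤ 2) (hγ : 0 ≤ gammaMax A) (huw : LL ℓ A u ≤ LL ℓ A w) :
    LL ℓ A (u + a • v) ≤
      exp (-(decayRate ν (gammaMax A) (Cstep ℓ A w) * a)) * LL ℓ A u := by
  set r := decayRate ν (gammaMax A) (Cstep ℓ A w)
  calc LL ℓ A (u + a • v) ≤ LL ℓ A u - a * ((1 - ν / 2) * gInf ℓ A u) :=
        mul_assoc a _ _ ▸ hstep.decrease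
    _ ≤ LL ℓ A u - a * (r * LL ℓ A u) := sub_le_sub_left
        (mul_le_mul_of_nonneg_left (h.decayRate_mul_LL_le hν hγ huw) hstep.nonneg) _
    _ = (1 - r * a) * LL ℓ A u := by ring
    _ ≤ exp (-(r * a)) * LL ℓ A u :=
        mul_le_mul_of_nonneg_right (one_sub_le_exp_neg _) h.LL_pos.le

lemma LL_add_smul_le_of_mem_Icc (hℓ : ConvexOn ℝ Set.univ ℓ)
    (hle : LL ℓ A (u + a • v) ≤ LL ℓ A u) {s : ℝ} (hs : s ∈ Set.Icc 0 a) :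
    LL ℓ A (u + s • v) ≤ LL ℓ A u := by
  have hmem : u + s • v ∈ segment ℝ u (u + a • v) := by
    rw [segment_eq_image']
    rcases (hs.1.trans hs.2).eq_or_lt with rfl | ha
    · exact ⟨0, by simp, by simp [le_antisymm hs.2 hs.1]⟩
    · refine ⟨s / a, ⟨div_nonneg hs.1 ha.le, (div_le_one ha).mpr hs.2⟩, ?_⟩
      simp [smul_smul, div_mul_cancel₀ s ha.ne']
  exact ((convexOn_LL hℓ).le_on_segment trivial trivial hmem).trans_eq (max_eq_left hle)

/- The slope of the risk along `v` rises by at least `ν/4 ‖Aᵀ∇L‖_∞` during the step, while its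
derivative is at most `C² L`. -/
lemma IsWolfeStep.mul_gInf_le (hstep : IsWolfeStep ℓ A ν u v a) (h : MemL ℓ) (hν : ν ≤ 2)
    (huw : LL ℓ A u ≤ LL ℓ A w) (hv : ∀ k, |A.mulVec v k| ≤ 1)
    (hdir : ∑ k, gradL ℓ A u k * A.mulVec v k = -gInf ℓ A u) :
    ν / 4 * gInf ℓ A u ≤ Cstep ℓ A w ^ 2 * LL ℓ A u * a := by
  set φ : ℝ → ℝ := fun s => ∑ k, gradL ℓ A (u + s • v) k * A.mulVec v k
  have hderiv := h.hasDerivAt_sum_gradL_mul (A := A) u v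
  have hderiv_le : ∀ s ∈ interior (Set.Icc 0 a), deriv φ s ≤ Cstep ℓ A w ^ 2 * LL ℓ A u := by
    intro s hs
    have hLs : LL ℓ A (u + s • v) ≤ LL ℓ A u :=
      LL_add_smul_le_of_mem_Icc h.convexOn (hstep.LL_add_smul_le hν) (interior_subset hs)
    rw [(hderiv s).deriv]
    exact (h.sum_iteratedDeriv_two_mul_sq_le (hLs.trans huw) hv).trans
      (mul_le_mul_of_nonneg_left hLs (sq_nonneg _))
  have hslope : φ a - φ 0 ≤ Cstep ℓ A w ^ 2 * LL ℓ A u * (a - 0) :=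
    (convex_Icc 0 a).image_sub_le_mul_sub_of_deriv_le
      (fun s _ => (hderiv s).continuousAt.continuousWithinAt)
      (fun s _ => (hderiv s).differentiableAt.differentiableWithinAt) hderiv_le
      0 ⟨le_rfl, hstep.nonneg⟩ a ⟨hstep.nonneg, le_rfl⟩ hstep.nonneg
  have hφ0 : φ 0 = -gInf ℓ A u := by simpa [φ] using hdir
  have hφa : -(1 - ν / 4) * gInf ℓ A u ≤ φ a := hstep.curvature
  linarith

lemma IsWolfeStep.le_length [NeZero m] (hstep : IsWolfeStep ℓ A ν u v a) (h : MemL ℓ)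
    (hν₀ : 0 ≤ ν) (hν₂ : ν ≤ 2) (huw : LL ℓ A u ≤ LL ℓ A w) (hv : ∀ k, |A.mulVec v k| ≤ 1)
    (hdir : ∑ k, gradL ℓ A u k * A.mulVec v k = -gInf ℓ A u) :
    ν * gammaMax A / (4 * Cstep ℓ A w ^ 4) ≤ a := by
  have hC : 0 < Cstep ℓ A w := h.Cstep_pos
  have hbound : ν / 4 * gammaMax A * gOne ℓ A u ≤ Cstep ℓ A w ^ 4 * a * gOne ℓ A u :=
    calc ν / 4 * gammaMax A * gOne ℓ A u = ν / 4 * (gammaMax A * gOne ℓ A u) := mul_assoc _ _ _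
      _ ≤ ν / 4 * gInf ℓ A u :=
          mul_le_mul_of_nonneg_left h.gammaMax_mul_gOne_le_gInf (by positivity)
      _ ≤ Cstep ℓ A w ^ 2 * LL ℓ A u * a := hstep.mul_gInf_le h hν₂ huw hv hdir
      _ ≤ Cstep ℓ A w ^ 2 * (Cstep ℓ A w ^ 2 * gOne ℓ A u) * a := by
          have := hstep.nonneg
          gcongr
          exact h.LL_le_sq_Cstep_mul_gOne huw
      _ = Cstep ℓ A w ^ 4 * a * gOne ℓ A u := by ring
  rw [div_le_iff₀ (by positivity)]
  linarith [le_of_mul_le_mul_right hbound h.gOne_pos]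

end WolfeStep

/-! ### Boosting runs with Wolfe steps -/

/-- The total step length `∑_{i=1}^t α_i` after `t` rounds, an upper bound for `‖λ_t‖₁`. -/
def stepSum (α : ℕ → ℝ) (t : ℕ) : ℝ := ∑ i ∈ Icc 1 t, α i

@[simp]
lemma stepSum_zero (α : ℕ → ℝ) : stepSum α 0 = 0 := by simp [stepSum]

lemma stepSum_succ (α : ℕ → ℝ) (t : ℕ) : stepSum α (t + 1) = stepSum α t + α (t + 1) :=
  sum_Icc_succ_top (Nat.le_add_left 1 t) _

lemma natCast_mul_le_stepSum {α : ℕ → ℝ} {c : ℝ} (h : ∀ i, c ≤ α (i + 1)) (t : ℕ) :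
    t * c ≤ stepSum α t := by
  induction t with
  | zero => simp
  | succ t ih =>
    rw [stepSum_succ]
    push_cast
    linarith [h t]

namespace IsBoostSeq

variable {ℓ : ℝ → ℝ} {A : Matrix (Fin m) (Fin n) ℝ} {lam v : ℕ → Fin n → ℝ} {α : ℕ → ℝ}
  (hseq : IsBoostSeq ℓ A lam α v)
include hseq

lemma zero : lam 0 = 0 := hseq.1

lemma succ (i : ℕ) : lam (i + 1) = lam i + α (i + 1) • v (i + 1) := hseq.2.1 (i + 1) i.succ_pos

lemma sum_gradL_mul (i : ℕ) :
    ∑ k, gradL ℓ A (lam i) k * A.mulVec (v (i + 1)) k = -gInf ℓ A (lam i) :=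
  hseq.2.2.2 (i + 1) i.succ_pos

lemma sum_abs_direction (i : ℕ) : ∑ j, |v (i + 1) j| = 1 := by
  obtain ⟨s, hs, j, hv⟩ := hseq.2.2.1 (i + 1) i.succ_pos
  have hs' : |s| = 1 := by rcases hs with rfl | rfl <;> simp
  simp [hv, hs', Pi.single_apply, apply_ite abs]

lemma abs_mulVec_direction_le (hA : ∀ i j, |A i j| ≤ 1) (i : ℕ) (k : Fin m) :
    |A.mulVec (v (i + 1)) k| ≤ 1 := by
  obtain ⟨s, hs, j, hv⟩ := hseq.2.2.1 (i + 1) i.succ_pos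
  rw [hv, Matrix.mulVec_smul, Matrix.mulVec_single_one]
  rcases hs with rfl | rfl <;> simpa using hA k j

lemma sum_abs_le_stepSum (hα : ∀ i, 0 ≤ α (i + 1)) (t : ℕ) : ∑ j, |lam t j| ≤ stepSum α t := by
  induction t with
  | zero => simp [hseq.zero]
  | succ t ih =>
    calc ∑ j, |lam (t + 1) j| ≤ ∑ j, (|lam t j| + α (t + 1) * |v (t + 1) j|) := by
          gcongr with j
          rw [hseq.succ, ← abs_of_nonneg (hα t), ← abs_mul, abs_of_nonneg (hα t)]
          exact abs_add_le _ _
      _ = (∑ j, |lam t j|) + α (t + 1) := by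
          rw [sum_add_distrib, ← mul_sum, hseq.sum_abs_direction, mul_one]
      _ ≤ stepSum α (t + 1) := by
          rw [stepSum_succ]
          gcongr

end IsBoostSeq

lemma le_margin [NeZero m] {A : Matrix (Fin m) (Fin n) ℝ} {u : Fin n → ℝ} {S b : ℝ}
    (hnonpos : ∀ k, A.mulVec u k ≤ 0) (hS : 0 < S) (huS : ∑ j, |u j| ≤ S)
    (hb : ∀ k, b * S ≤ -(A.mulVec u k)) : b ≤ margin A u := by
  refine le_ciInf fun k => ?_
  have hbS : b ≤ -(A.mulVec u k) / S := (le_div_iff₀ hS).mpr (hb k)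
  have hnorm : 0 ≤ ∑ j, |u j| := sum_nonneg fun j _ => abs_nonneg (u j)
  rcases hnorm.eq_or_lt with hzero | hpos
  · have hu : u = 0 := funext fun j => abs_eq_zero.mp <|
      (sum_eq_zero_iff_of_nonneg fun j _ => abs_nonneg (u j)).mp hzero.symm j (mem_univ j)
    simpa [hu] using hbS
  · exact hbS.trans (div_le_div_of_nonneg_left (neg_nonneg.mpr (hnonpos k)) hpos huS)

/-- Boosting iterates all of whose steps satisfy the Wolfe conditions; step `i + 1` leads from
`lam i` to `lam (i + 1)`. -/
structure IsWolfeBoostSeq (ℓ : ℝ → ℝ) (A : Matrix (Fin m) (Fin n) ℝ) (ν : ℝ)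
    (lam : ℕ → Fin n → ℝ) (α : ℕ → ℝ) (v : ℕ → Fin n → ℝ) : Prop where
  boost : IsBoostSeq ℓ A lam α v
  wolfe : ∀ i, IsWolfeStep ℓ A ν (lam i) (v (i + 1)) (α (i + 1))

namespace IsWolfeBoostSeq

variable {ℓ : ℝ → ℝ} {A : Matrix (Fin m) (Fin n) ℝ} {ν : ℝ} {lam v : ℕ → Fin n → ℝ}
  {α : ℕ → ℝ} {s t : ℕ}

lemma antitone_LL (hseq : IsWolfeBoostSeq ℓ A ν lam α v) (hν : ν ≤ 2) :
    Antitone fun i => LL ℓ A (lam i) :=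
  antitone_nat_of_succ_le fun i => by
    rw [hseq.boost.succ]
    exact (hseq.wolfe i).LL_add_smul_le hν

lemma monotone_stepSum (hseq : IsWolfeBoostSeq ℓ A ν lam α v) : Monotone (stepSum α) :=
  monotone_nat_of_le_succ fun i => by
    rw [stepSum_succ]
    exact le_add_of_nonneg_right (hseq.wolfe i).nonneg

lemma mul_le_stepSum [NeZero m] (hseq : IsWolfeBoostSeq ℓ A ν lam α v) (h : MemL ℓ)
    (hA : ∀ i j, |A i j| ≤ 1) (hν₀ : 0 ≤ ν) (hν₂ : ν ≤ 2) (t : ℕ) :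
    t * (ν * gammaMax A / (4 * Cstep ℓ A (lam 0) ^ 4)) ≤ stepSum α t :=
  natCast_mul_le_stepSum (fun i => (hseq.wolfe i).le_length h hν₀ hν₂
    (hseq.antitone_LL hν₂ i.zero_le) (hseq.boost.abs_mulVec_direction_le hA i)
    (hseq.boost.sum_gradL_mul i)) t

lemma LL_le_mul_exp [NeZero m] (hseq : IsWolfeBoostSeq ℓ A ν lam α v) (h : MemL ℓ)
    (hν : ν ≤ 2) (hγ : 0 ≤ gammaMax A) (hst : s ≤ t) :
    LL ℓ A (lam t) ≤ LL ℓ A (lam s) *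
      exp (-(decayRate ν (gammaMax A) (Cstep ℓ A (lam s)) * (stepSum α t - stepSum α s))) := by
  set r := decayRate ν (gammaMax A) (Cstep ℓ A (lam s))
  induction t, hst using Nat.le_induction with
  | base => simp
  | succ i hsi ih =>
    calc LL ℓ A (lam (i + 1)) ≤ exp (-(r * α (i + 1))) * LL ℓ A (lam i) := by
          rw [hseq.boost.succ]
          exact (hseq.wolfe i).LL_add_smul_le_exp_mul h hν hγ (hseq.antitone_LL hν hsi)
      _ ≤ exp (-(r * α (i + 1))) * (LL ℓ A (lam s) * exp (-(r * (stepSum α i - stepSum α s)))) := by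
          gcongr
      _ = LL ℓ A (lam s) * exp (-(r * (stepSum α (i + 1) - stepSum α s))) := by
          rw [mul_left_comm, ← exp_add, stepSum_succ]
          ring_nf

lemma le_neg_mulVec [NeZero m] (hseq : IsWolfeBoostSeq ℓ A ν lam α v) (h : MemL ℓ)
    (hν : ν ≤ 2) (hγ : 0 ≤ gammaMax A) (hst : s ≤ t) (k : Fin m) :
    decayRate ν (gammaMax A) (Cstep ℓ A (lam s)) * stepSum α t -
        log (m * Cstep ℓ A (lam s) * LL ℓ A (lam s) *
          exp (decayRate ν (gammaMax A) (Cstep ℓ A (lam s)) * stepSum α s)) ≤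
      -(A.mulVec (lam t) k) := by
  set C := Cstep ℓ A (lam s)
  set r := decayRate ν (gammaMax A) C
  have hC : 0 < C := h.Cstep_pos
  have hm : (0 : ℝ) < m := Nat.cast_pos.mpr (NeZero.pos m)
  have hL : 0 < LL ℓ A (lam s) := h.LL_pos
  have hexp : exp (A.mulVec (lam t) k) ≤
      m * C * LL ℓ A (lam s) * exp (r * stepSum α s) * exp (-(r * stepSum α t)) :=
    calc exp (A.mulVec (lam t) k) ≤ C * ℓ (A.mulVec (lam t) k) := by
          simpa using (h.cbound_Cstep (hseq.antitone_LL hν hst) k).exp_le le_rfl zero_le_two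
      _ ≤ C * (m * LL ℓ A (lam t)) := by gcongr; exact h.apply_mulVec_le k
      _ ≤ C * (m * (LL ℓ A (lam s) * exp (-(r * (stepSum α t - stepSum α s))))) := by
          gcongr
          exact hseq.LL_le_mul_exp h hν hγ hst
      _ = m * C * LL ℓ A (lam s) * exp (r * stepSum α s) * exp (-(r * stepSum α t)) := by
          rw [mul_sub, neg_sub, sub_eq_add_neg, exp_add]
          ring
  have hlog := log_le_log (exp_pos _) hexp
  rw [log_mul (by positivity) (exp_ne_zero _), log_exp, log_exp] at hlog
  linarith

lemma mulVec_nonpos [NeZero m] (hseq : IsWolfeBoostSeq ℓ A ν lam α v) (h : MemL ℓ)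
    (hν : ν ≤ 2) (hγ : 0 ≤ gammaMax A)
    (hlog : log m ≤ decayRate ν (gammaMax A) (Cstep ℓ A (lam 0)) * stepSum α t) (k : Fin m) :
    A.mulVec (lam t) k ≤ 0 := by
  have hm : (0 : ℝ) < m := Nat.cast_pos.mpr (NeZero.pos m)
  have hinit : m * LL ℓ A (lam 0) = m * ℓ 0 := by
    simp [natCast_mul_LL, hseq.boost.zero]
  have hdecay := hseq.LL_le_mul_exp h hν hγ t.zero_le
  rw [stepSum_zero, sub_zero] at hdecay
  refine h.strictMono.le_iff_le.mp ?_
  calc ℓ (A.mulVec (lam t) k) ≤ m * LL ℓ A (lam t) := h.apply_mulVec_le k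
    _ ≤ m * (LL ℓ A (lam 0) * exp (-log m)) := by
        have := h.LL_pos (A := A) (u := lam 0)
        refine mul_le_mul_of_nonneg_left (hdecay.trans ?_) hm.le
        gcongr
    _ = ℓ 0 := by
        rw [← mul_assoc, hinit, exp_neg, exp_log hm]
        field_simp

lemma log_le_decayRate_mul_stepSum [NeZero m] (hseq : IsWolfeBoostSeq ℓ A ν lam α v)
    (h : MemL ℓ) (hA : ∀ i j, |A i j| ≤ 1) (hν : ν ∈ Set.Ioo (0 : ℝ) 2) (hγ : 0 < gammaMax A)
    (ht : 8 * Cstep ℓ A (lam 0) ^ 6 * log m / (gammaMax A ^ 2 * ν * (2 - ν)) ≤ t) :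
    log m ≤ decayRate ν (gammaMax A) (Cstep ℓ A (lam 0)) * stepSum α t := by
  set C := Cstep ℓ A (lam 0)
  have hC : 0 < C := h.Cstep_pos
  have hν₀ : 0 < ν := hν.1
  have hν₂ : 0 < 2 - ν := sub_pos.mpr hν.2
  calc log m
      = decayRate ν (gammaMax A) C *
          (8 * C ^ 6 * log m / (gammaMax A ^ 2 * ν * (2 - ν)) *
            (ν * gammaMax A / (4 * C ^ 4))) := by
        rw [decayRate]
        field_simp
        ring
    _ ≤ decayRate ν (gammaMax A) C * (t * (ν * gammaMax A / (4 * C ^ 4))) := by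
        have := decayRate_nonneg (C := C) hν.2.le hγ.le
        gcongr
    _ ≤ decayRate ν (gammaMax A) C * stepSum α t :=
        mul_le_mul_of_nonneg_left (hseq.mul_le_stepSum h hA hν₀.le hν.2.le t)
          (decayRate_nonneg hν.2.le hγ.le)

lemma decayRate_sub_div_le_margin [NeZero m] (hseq : IsWolfeBoostSeq ℓ A ν lam α v)
    (h : MemL ℓ) (hν : ν ≤ 2) (hγ : 0 ≤ gammaMax A) (hst : s ≤ t)
    (hnonpos : ∀ k, A.mulVec (lam t) k ≤ 0) {p c : ℝ} (hp : 0 < p) (hpt : p ≤ stepSum α t)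
    (hc₁ : 1 ≤ c)
    (hc : m * Cstep ℓ A (lam s) * LL ℓ A (lam s) *
      exp (decayRate ν (gammaMax A) (Cstep ℓ A (lam s)) * stepSum α s) ≤ c) :
    decayRate ν (gammaMax A) (Cstep ℓ A (lam s)) - log c / p ≤ margin A (lam t) := by
  refine le_margin hnonpos (hp.trans_le hpt)
    (hseq.boost.sum_abs_le_stepSum (fun i => (hseq.wolfe i).nonneg) t) fun k => ?_
  set r := decayRate ν (gammaMax A) (Cstep ℓ A (lam s))
  have hlog_le : log c ≤ log c / p * stepSum α t :=
    calc log c = log c / p * p := (div_mul_cancel₀ _ hp.ne').symm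
      _ ≤ log c / p * stepSum α t :=
        mul_le_mul_of_nonneg_left hpt (div_nonneg (log_nonneg hc₁) hp.le)
  have hC : 0 < Cstep ℓ A (lam s) := h.Cstep_pos
  have hL : 0 < LL ℓ A (lam s) := h.LL_pos
  have hm : 0 < m := NeZero.pos m
  calc (r - log c / p) * stepSum α t ≤ r * stepSum α t - log c := by
        rw [sub_mul]
        gcongr
    _ ≤ r * stepSum α t -
          log (m * Cstep ℓ A (lam s) * LL ℓ A (lam s) * exp (r * stepSum α s)) := by gcongr
    _ ≤ -(A.mulVec (lam t) k) := hseq.le_neg_mulVec h hν hγ hst k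

end IsWolfeBoostSeq

theorem margin_wolfe_general (hm : 0 < m) (A : Matrix (Fin m) (Fin n) ℝ)
    (hA : ∀ i j, |A i j| ≤ 1) (ℓ : ℝ → ℝ) (hℓ : MemL ℓ) (ν : ℝ) (hν : ν ∈ Set.Ioo (0 : ℝ) 2)
    (hγ : 0 < gammaMax A) (lam : ℕ → Fin n → ℝ) (α : ℕ → ℝ) (v : ℕ → Fin n → ℝ)
    (hseq : IsWolfeBoostSeq ℓ A ν lam α v) (t₀ t : ℕ) (ht₀ : t₀ ≤ t) (ht : 0 < t)
    (htlb : 8 * Cstep ℓ A (lam 0) ^ 6 * log m / (gammaMax A ^ 2 * ν * (2 - ν)) ≤ t) :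
    gammaMax A * ((2 - ν) / (2 * Cstep ℓ A (lam t₀) ^ 2)) -
        4 * Cstep ℓ A (lam 0) ^ 4 *
          log (max 1 (m * Cstep ℓ A (lam t₀) * LL ℓ A (lam t₀) *
            exp ((2 - ν) * gammaMax A / (2 * Cstep ℓ A (lam t₀) ^ 2) *
              ∑ i ∈ Icc 1 (t₀ + 1), α i))) /
          (t * ν * gammaMax A) ≤
      margin A (lam t) := by
  have : NeZero m := ⟨hm.ne'⟩
  have hν₀ : 0 < ν := hν.1
  have hC₀ : 0 < Cstep ℓ A (lam 0) := hℓ.Cstep_pos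
  have hC : 0 < Cstep ℓ A (lam t₀) := hℓ.Cstep_pos
  have hL : 0 < LL ℓ A (lam t₀) := hℓ.LL_pos
  have hr := decayRate_nonneg (C := Cstep ℓ A (lam t₀)) hν.2.le hγ.le
  have hnonpos := hseq.mulVec_nonpos hℓ hν.2.le hγ.le
    (hseq.log_le_decayRate_mul_stepSum hℓ hA hν hγ htlb)
  refine le_of_eq_of_le ?_ <| hseq.decayRate_sub_div_le_margin hℓ hν.2.le hγ.le ht₀ hnonpos
    (by positivity) (hseq.mul_le_stepSum hℓ hA hν₀.le hν.2.le t) (le_max_left 1 _)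
    (le_max_of_le_right <| mul_le_mul_of_nonneg_left (exp_le_exp.mpr <|
      mul_le_mul_of_nonneg_left (hseq.monotone_stepSum (t₀.le_add_right 1)) hr) (by positivity))
  rw [decayRate, stepSum]
  field_simp

/-- margin lower bound for Wolfe steps. -/
theorem margin_wolfe {m n : ℕ} (hm : 0 < m) (hn : 0 < n)
    (A : Matrix (Fin m) (Fin n) ℝ) (hA : ∀ i j, |A i j| ≤ 1)
    (ℓ : ℝ → ℝ) (hℓ : MemLinf ℓ)
    (ν : ℝ) (hν : ν ∈ Set.Ioc (0:ℝ) 1)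
    (hγ : 0 < gammaMax A)
    (lam : ℕ → Fin n → ℝ) (α : ℕ → ℝ) (v : ℕ → Fin n → ℝ)
    (hseq : IsBoostSeq ℓ A lam α v)
    (hwolfe : ∀ i : ℕ, 1 ≤ i →
      0 ≤ α i ∧
      LL ℓ A (lam (i-1) + α i • v i) ≤
        LL ℓ A (lam (i-1)) - α i * (1 - ν/2) * gInf ℓ A (lam (i-1)) ∧
      ∑ k, gradL ℓ A (lam (i-1) + α i • v i) k * A.mulVec (v i) k ≥
        -(1 - ν/4) * gInf ℓ A (lam (i-1)))
    (t₀ t : ℕ) (ht : t₀ < t)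
    (htlb : 8 * (Cstep ℓ A (lam 0))^6 * Real.log m / ((gammaMax A)^2 * ν * (2-ν)) ≤ (t:ℝ)) :
    margin A (lam t) ≥
      gammaMax A * ((2-ν) / (2 * (Cstep ℓ A (lam t₀))^2)) -
      4 * (Cstep ℓ A (lam 0))^4 *
        Real.log (max 1
          ((m:ℝ) * Cstep ℓ A (lam t₀) * LL ℓ A (lam t₀) *
            Real.exp (((2-ν) * gammaMax A / (2 * (Cstep ℓ A (lam t₀))^2)) *
              ∑ i ∈ Finset.Icc 1 (t₀+1), α i))) /
        ((t:ℝ) * ν * gammaMax A) :=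
  margin_wolfe_general hm A hA ℓ hℓ.1 ν ⟨hν.1, hν.2.trans_lt one_lt_two⟩ hγ lam α v
    ⟨hseq, fun i => let ⟨h₁, h₂, h₃⟩ := hwolfe (i + 1) i.succ_pos; ⟨h₁, h₂, h₃⟩⟩
    t₀ t ht.le (t₀.zero_le.trans_lt ht) htlb
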